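/- The optimal value of the barycenter LP for the discrete probability measures P₁,…,P_N equals inf_{P ∈ 𝒫²(ℝ^d)} Σᵢ₌₁ᴺ W₂(P,Pᵢ)², and for any optimal solution (y*, z*) of the LP, the measure P̄ = Σ_j z*_j δ_{x_j} is a barycenter of P₁,…,P_N with Σᵢ₌₁ᴺ W₂(P̄,Pᵢ)² = c(y*). -/

import Mathlib

/-!
The optimal LP value and the Wasserstein infimum bound each other.

A feasible point `(y, z)` gives the measure `∑ z_j δ_j` together with the couplings
`∑ y_{ijk} δ_{(j,k)}` to the `P i`, whose total cost is `c(y)` (`W2_le_of_feasible`).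

Conversely, let `γ i` couple an arbitrary probability measure `Q` with `P i`
(`feasible_of_couplings`). Disintegrating each `γ i` over `Q` and taking the product of the
conditional laws glues them into one measure on tuples `(x, κ₁, …, κ_N)`, where `κ` ranges over the
finitely many tuples of support points. For fixed `κ`, the centroid minimizes `∑ ‖x - κ_i‖²`
(`centroid_min`), so moving `x` to the centroid of `κ` does not increase the cost, and the resulting
weights on pairs (centroid, `κ_i`) form a feasible LP point (`feasible_of_weights`). Passing to the
infimum over the `γ i` (`le_sum_W2`) shows that the LP value is at most `∑ W₂(Q, P i)²`.

The LP attains its minimum because its feasible set is, up to variables that do not enter the LP,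
compact and nonempty (`exists_optimal`).
-/


open MeasureTheory ENNReal

noncomputable section

/-- Euclidean space `ℝ^d`. -/
abbrev Euc (d : ℕ) := EuclideanSpace ℝ (Fin d)

/-- The (topological) support of a measure on `ℝ^d`: the set of points all of whose
neighborhoods have positive measure. -/
def msupp {d : ℕ} (μ : MeasureTheory.Measure (Euc d)) : Set (Euc d) :=
  {x | ∀ U ∈ nhds x, μ U ≠ 0}

/-- A discrete probability measure: a probability measure with finite support. -/
def IsDiscreteProb {d : ℕ} (μ : MeasureTheory.Measure (Euc d)) : Prop :=
  IsProbabilityMeasure μ ∧ (msupp μ).Finite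

/-- Finite second moment. -/
def FinSecondMoment {d : ℕ} (μ : MeasureTheory.Measure (Euc d)) : Prop :=
  ∫⁻ x, (‖x‖₊ : ℝ≥0∞) ^ 2 ∂μ < ⊤

/-- A coupling of `P` and `Q`: a measure on the product whose first marginal is `P`
and second marginal is `Q`. -/
def IsCoupling {d : ℕ} (γ : MeasureTheory.Measure (Euc d × Euc d))
    (P Q : MeasureTheory.Measure (Euc d)) : Prop :=
  γ.map Prod.fst = P ∧ γ.map Prod.snd = Q

/-- Squared 2-Wasserstein distance: infimum of the quadratic transport cost over couplings. -/
def W2sq {d : ℕ} (P Q : MeasureTheory.Measure (Euc d)) : ℝ≥0∞ :=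
  ⨅ γ ∈ {γ | IsCoupling γ P Q}, ∫⁻ p, (‖p.1 - p.2‖₊ : ℝ≥0∞) ^ 2 ∂γ

/-- A barycenter of `P 0, …, P (N-1)`: a probability measure with finite second moment
minimizing the sum of squared Wasserstein distances over all such measures. -/
def IsBarycenter {d N : ℕ} (P : Fin N → MeasureTheory.Measure (Euc d))
    (Pbar : MeasureTheory.Measure (Euc d)) : Prop :=
  IsProbabilityMeasure Pbar ∧ FinSecondMoment Pbar ∧
    ∀ Q : MeasureTheory.Measure (Euc d), IsProbabilityMeasure Q → FinSecondMoment Q →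
      ∑ i, W2sq Pbar (P i) ≤ ∑ i, W2sq Q (P i)

/-- A multi-coupling of `P 0, …, P (N-1)`: a probability measure on `(ℝ^d)^N` whose
`i`-th coordinate marginal is `P i`. -/
def IsMultiCoupling {d N : ℕ} (π : MeasureTheory.Measure (Fin N → Euc d))
    (P : Fin N → MeasureTheory.Measure (Euc d)) : Prop :=
  IsProbabilityMeasure π ∧ ∀ i, π.map (fun x => x i) = P i

/-- The averaging map `(x₁, …, x_N) ↦ (x₁ + ⋯ + x_N)/N`. -/
def avgMap (d N : ℕ) : (Fin N → Euc d) → Euc d := fun x => (N : ℝ)⁻¹ • ∑ i, x i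

/-- The set `S` of all centroids of support points, one from each measure. -/
def centroidSet {d N : ℕ} (P : Fin N → MeasureTheory.Measure (Euc d)) : Set (Euc d) :=
  {s | ∃ x : Fin N → Euc d, (∀ i, x i ∈ msupp (P i)) ∧ s = (N : ℝ)⁻¹ • ∑ i, x i}

/-- Feasibility for the barycenter LP: variables `y i j k` (transported mass from the
candidate barycenter support point `j ∈ S` to the support point `k` of `Pᵢ`) and `z j`
(mass of the barycenter at `j`), subject to nonnegativity, the row constraints
`Σ_k y i j k = z j`, and the column constraints `Σ_j y i j k = Pᵢ({k})`. -/
def LPFeasible {d N : ℕ} (P : Fin N → MeasureTheory.Measure (Euc d))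
    (SF : Finset (Euc d)) (suppF : Fin N → Finset (Euc d))
    (y : Fin N → Euc d → Euc d → ℝ) (z : Euc d → ℝ) : Prop :=
  (∀ i j k, 0 ≤ y i j k) ∧ (∀ j, 0 ≤ z j) ∧
  (∀ i, ∀ j ∈ SF, ∑ k ∈ suppF i, y i j k = z j) ∧
  (∀ i, ∀ k ∈ suppF i, ∑ j ∈ SF, y i j k = (P i {k}).toReal)

/-- The cost `c(y) = Σ_{i,j,k} ‖x_j - x_{ik}‖² y_{ijk}` of the barycenter LP. -/
def LPcost {d N : ℕ} (SF : Finset (Euc d)) (suppF : Fin N → Finset (Euc d))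
    (y : Fin N → Euc d → Euc d → ℝ) : ℝ :=
  ∑ i, ∑ j ∈ SF, ∑ k ∈ suppF i, ‖j - k‖ ^ 2 * y i j k

/-- An optimal solution of the barycenter LP: a feasible point attaining the minimum cost. -/
def LPOptimal {d N : ℕ} (P : Fin N → MeasureTheory.Measure (Euc d))
    (SF : Finset (Euc d)) (suppF : Fin N → Finset (Euc d))
    (y : Fin N → Euc d → Euc d → ℝ) (z : Euc d → ℝ) : Prop :=
  LPFeasible P SF suppF y z ∧
    ∀ y' z', LPFeasible P SF suppF y' z' → LPcost SF suppF y ≤ LPcost SF suppF y'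

/-! ### Centroids and finitely supported measures -/

/-- The centroid minimizes the sum of squared distances. -/
lemma centroid_min {d N : ℕ} (hN : 0 < N) (κ : Fin N → Euc d) (x : Euc d) :
    ∑ i, ‖avgMap d N κ - κ i‖ ^ 2 ≤ ∑ i, ‖x - κ i‖ ^ 2 := by
  set a := avgMap d N κ with ha
  have h0 : ∑ i, (a - κ i) = 0 := by
    have hN' : (N : ℝ) ≠ 0 := by positivity
    rw [Finset.sum_sub_distrib, ha, avgMap]
    simp only [Finset.sum_const, Finset.card_univ, Fintype.card_fin]
    rw [← Nat.cast_smul_eq_nsmul ℝ, smul_smul, mul_inv_cancel₀ hN', one_smul, sub_self]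
  have h1 : ∀ i, ‖x - κ i‖ ^ 2
      = ‖x - a‖ ^ 2 + 2 * inner ℝ (x - a) (a - κ i) + ‖a - κ i‖ ^ 2 := by
    intro i
    rw [← norm_add_sq_real]
    congr 2
    abel
  simp only [h1, Finset.sum_add_distrib, ← Finset.mul_sum, ← inner_sum, h0, inner_zero_right]
  have : 0 ≤ ∑ _i : Fin N, ‖x - a‖ ^ 2 := by positivity
  linarith

/-- By second countability, the complement of the support is a null set. -/
lemma msupp_compl_null {d : ℕ} (μ : Measure (Euc d)) : μ (msupp μ)ᶜ = 0 := by
  apply measure_null_of_locally_null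
  intro x hx
  simp only [msupp, Set.mem_compl_iff, Set.mem_ofPred_eq, not_forall, not_not] at hx
  obtain ⟨U, hU, h0⟩ := hx
  exact ⟨U, mem_nhdsWithin_of_mem_nhds hU, h0⟩

/-- Integration against a measure carried by a finite set is a finite sum. -/
lemma lintegral_of_carrier {d : ℕ} {μ : Measure (Euc d)} {F : Finset (Euc d)}
    (h : μ (↑F : Set (Euc d))ᶜ = 0) (f : Euc d → ℝ≥0∞) :
    ∫⁻ x, f x ∂μ = ∑ k ∈ F, μ {k} * f k := by
  have : μ.restrict (↑F : Set (Euc d)) = μ :=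
    Measure.restrict_eq_self_of_ae_mem (mem_ae_iff.2 h)
  rw [← this, lintegral_finset]
  rw [this]
  exact Finset.sum_congr rfl fun k _ => mul_comm _ _

lemma eq_sum_dirac {d : ℕ} {μ : Measure (Euc d)} {F : Finset (Euc d)}
    (h : μ (↑F : Set (Euc d))ᶜ = 0) : μ = ∑ k ∈ F, μ {k} • Measure.dirac k := by
  ext s hs
  rw [← lintegral_indicator_one hs, lintegral_of_carrier h]
  simp [Measure.finsetSum_apply, Measure.dirac_apply' _ hs]

/-! ### From LP points to couplings -/

/-- A feasible LP point bounds the transport cost of the measure `∑ z_j δ_j`, through the couplings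
`∑ y_{ijk} δ_{(j,k)}`. -/
lemma W2_le_of_feasible {d N : ℕ} (P : Fin N → Measure (Euc d))
    (hP : ∀ i, IsProbabilityMeasure (P i))
    (SF : Finset (Euc d)) (suppF : Fin N → Finset (Euc d))
    (hnull : ∀ i, P i (↑(suppF i) : Set (Euc d))ᶜ = 0)
    (y : Fin N → Euc d → Euc d → ℝ) (z : Euc d → ℝ) (h : LPFeasible P SF suppF y z) :
    ∑ i, W2sq (∑ j ∈ SF, ENNReal.ofReal (z j) • Measure.dirac j) (P i)
      ≤ ENNReal.ofReal (LPcost SF suppF y) := by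
  obtain ⟨hy, hz, hrow, hcol⟩ := h
  unfold LPcost
  rw [ENNReal.ofReal_sum_of_nonneg (fun i _ => Finset.sum_nonneg fun j _ =>
    Finset.sum_nonneg fun k _ => mul_nonneg (by positivity) (hy i j k))]
  refine Finset.sum_le_sum fun i _ => ?_
  set γ : Measure (Euc d × Euc d) :=
    ∑ j ∈ SF, ∑ k ∈ suppF i, ENNReal.ofReal (y i j k) • Measure.dirac (j, k) with hγ
  have hc : IsCoupling γ (∑ j ∈ SF, ENNReal.ofReal (z j) • Measure.dirac j) (P i) := by
    constructor
    · ext s hs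
      rw [Measure.map_apply measurable_fst hs]
      simp only [hγ, Measure.finsetSum_apply, Measure.smul_apply, smul_eq_mul,
        Measure.dirac_apply' _ hs, Measure.dirac_apply' _ (measurable_fst hs)]
      refine Finset.sum_congr rfl fun j hj => ?_
      rw [← hrow i j hj, ENNReal.ofReal_sum_of_nonneg (fun k _ => hy i j k), Finset.sum_mul]
      rfl
    · conv_rhs => rw [eq_sum_dirac (hnull i)]
      ext s hs
      rw [Measure.map_apply measurable_snd hs]
      simp only [hγ, Measure.finsetSum_apply, Measure.smul_apply, smul_eq_mul,
        Measure.dirac_apply' _ hs, Measure.dirac_apply' _ (measurable_snd hs)]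
      rw [Finset.sum_comm]
      refine Finset.sum_congr rfl fun k hk => ?_
      rw [← ENNReal.ofReal_toReal (measure_ne_top (P i) {k}), ← hcol i k hk,
        ENNReal.ofReal_sum_of_nonneg (fun j _ => hy i j k), Finset.sum_mul]
      rfl
  refine (iInf₂_le γ hc).trans (le_of_eq ?_)
  rw [hγ, lintegral_finsetSum_measure, ENNReal.ofReal_sum_of_nonneg (fun j _ =>
    Finset.sum_nonneg fun k _ => mul_nonneg (by positivity) (hy i j k))]
  refine Finset.sum_congr rfl fun j _ => ?_
  rw [lintegral_finsetSum_measure, ENNReal.ofReal_sum_of_nonneg (fun k _ =>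
    mul_nonneg (by positivity) (hy i j k))]
  refine Finset.sum_congr rfl fun k _ => ?_
  rw [lintegral_smul_measure, lintegral_dirac, ENNReal.ofReal_mul (by positivity),
    ENNReal.ofReal_pow (by positivity), ofReal_norm, smul_eq_mul, mul_comm]
  rfl

/-! ### From couplings to LP points -/

/-- The one-coordinate marginal of a product of probability weights. -/
lemma marginal {d N : ℕ} (F : Fin N → Finset (Euc d)) (g : Fin N → Euc d → ℝ≥0∞)
    (hg : ∀ i, ∑ k ∈ F i, g i k = 1) (i : Fin N) (h : Euc d → ℝ≥0∞) :
    ∑ κ ∈ Fintype.piFinset F, (∏ l, g l (κ l)) * h (κ i) = ∑ k ∈ F i, g i k * h k := by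
  have h1 : ∀ κ : Fin N → Euc d, (∏ l, g l (κ l)) * h (κ i)
      = ∏ l, g l (κ l) * (if l = i then h (κ l) else 1) := by
    intro κ
    rw [Finset.prod_mul_distrib]
    simp
  simp only [h1]
  rw [← Finset.prod_univ_sum F (fun l k => g l k * (if l = i then h k else 1)),
    Finset.prod_eq_single i]
  · simp
  · intro b _ hb
    simp [hb, hg]
  · simp

/-- A multi-coupling with weights `W` on tuples `κ` of support points, pushed forward along the maps
`κ ↦ (centroid, κ_i)`, is a feasible LP point whose cost is the
`W`-weighted sum of `∑ ‖centroid - κ_i‖²`. -/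
lemma feasible_of_weights {d N : ℕ} (P : Fin N → Measure (Euc d))
    (SF : Finset (Euc d)) (suppF : Fin N → Finset (Euc d))
    (hSF : ∀ κ ∈ Fintype.piFinset suppF, avgMap d N κ ∈ SF)
    (W : (Fin N → Euc d) → ℝ) (hW : ∀ κ, 0 ≤ W κ)
    (hmarg : ∀ i, ∀ k ∈ suppF i,
      ∑ κ ∈ Fintype.piFinset suppF, (if κ i = k then W κ else 0) = (P i {k}).toReal) :
    ∃ y z, LPFeasible P SF suppF y z ∧ LPcost SF suppF y =
      ∑ κ ∈ Fintype.piFinset suppF, W κ * ∑ i, ‖avgMap d N κ - κ i‖ ^ 2 := by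
  classical
  refine ⟨fun i j k => ∑ κ ∈ Fintype.piFinset suppF,
      if avgMap d N κ = j then (if κ i = k then W κ else 0) else 0,
    fun j => ∑ κ ∈ Fintype.piFinset suppF, if avgMap d N κ = j then W κ else 0,
    ⟨?_, ?_, ?_, ?_⟩, ?_⟩
  · intro i j k
    refine Finset.sum_nonneg fun κ _ => ?_
    have := hW κ
    split_ifs <;> simp [this]
  · intro j
    refine Finset.sum_nonneg fun κ _ => ?_
    have := hW κ
    split_ifs <;> simp [this]
  · intro i j _
    rw [Finset.sum_comm]
    refine Finset.sum_congr rfl fun κ hκ => ?_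
    split_ifs
    · rw [Finset.sum_ite_eq, if_pos (Fintype.mem_piFinset.1 hκ i)]
    · simp
  · intro i k hk
    rw [Finset.sum_comm, ← hmarg i k hk]
    refine Finset.sum_congr rfl fun κ hκ => ?_
    rw [Finset.sum_ite_eq, if_pos (hSF κ hκ)]
  · unfold LPcost
    simp only [Finset.mul_sum]
    rw [Finset.sum_comm (s := Fintype.piFinset suppF)]
    refine Finset.sum_congr rfl fun i _ => ?_
    have : ∀ j ∈ SF, ∑ k ∈ suppF i, ∑ κ ∈ Fintype.piFinset suppF,
        ‖j - k‖ ^ 2 * (if avgMap d N κ = j then (if κ i = k then W κ else 0) else 0)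
        = ∑ κ ∈ Fintype.piFinset suppF,
          if avgMap d N κ = j then W κ * ‖avgMap d N κ - κ i‖ ^ 2 else 0 := by
      intro j _
      rw [Finset.sum_comm]
      refine Finset.sum_congr rfl fun κ hκ => ?_
      split_ifs with hj
      · simp only [mul_ite, mul_zero]
        rw [Finset.sum_ite_eq, if_pos (Fintype.mem_piFinset.1 hκ i), hj, mul_comm]
      · simp
    rw [Finset.sum_congr rfl this, Finset.sum_comm]
    refine Finset.sum_congr rfl fun κ hκ => ?_
    rw [Finset.sum_ite_eq, if_pos (hSF κ hκ)]

/-- Couplings of a common `Q` with the `P i` can be glued along `Q`; replacing the `Q`-coordinate by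
the centroid gives a feasible LP point that costs no more. -/
lemma feasible_of_couplings {d N : ℕ} (hN : 0 < N) (P : Fin N → Measure (Euc d))
    (SF : Finset (Euc d)) (suppF : Fin N → Finset (Euc d))
    (hSF : ∀ κ ∈ Fintype.piFinset suppF, avgMap d N κ ∈ SF)
    (hnull : ∀ i, P i (↑(suppF i) : Set (Euc d))ᶜ = 0)
    (Q : Measure (Euc d)) [IsProbabilityMeasure Q]
    (γ : Fin N → Measure (Euc d × Euc d)) (hγ : ∀ i, IsCoupling (γ i) Q (P i)) :
    ∃ y z, LPFeasible P SF suppF y z ∧ ENNReal.ofReal (LPcost SF suppF y) ≤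
      ∑ i, ∫⁻ p, (‖p.1 - p.2‖₊ : ℝ≥0∞) ^ 2 ∂(γ i) := by
  classical
  have hprob : ∀ i, IsProbabilityMeasure (γ i) := by
    intro i
    constructor
    have := congrArg (fun μ => μ Set.univ) (hγ i).1
    simpa [Measure.map_apply measurable_fst MeasurableSet.univ] using this
  have hint : ∀ i (f : Euc d × Euc d → ℝ≥0∞), Measurable f →
      ∫⁻ p, f p ∂(γ i) = ∫⁻ x, ∫⁻ k, f (x, k) ∂((γ i).condKernel x) ∂Q := by
    intro i f hf
    have hfst : (γ i).fst = Q := (hγ i).1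
    conv_lhs => rw [← (γ i).disintegrate (γ i).condKernel]
    rw [Measure.lintegral_compProd hf, hfst]
  -- the conditional laws are carried by the finite supports
  have hcar : ∀ i, ∀ᵐ x ∂Q, (γ i).condKernel x (↑(suppF i) : Set (Euc d))ᶜ = 0 := by
    intro i
    have hm : MeasurableSet ((↑(suppF i) : Set (Euc d))ᶜ) :=
      (suppF i).measurableSet.compl
    have h1 := hint i ((Prod.snd ⁻¹' (↑(suppF i) : Set (Euc d))ᶜ).indicator 1)
      (measurable_one.indicator (measurable_snd hm))
    rw [lintegral_indicator_one (measurable_snd hm), ← Measure.map_apply measurable_snd hm,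
      (hγ i).2, hnull i] at h1
    have h2 : ∀ x, ∫⁻ k, (Prod.snd ⁻¹' (↑(suppF i) : Set (Euc d))ᶜ).indicator
        (1 : Euc d × Euc d → ℝ≥0∞) (x, k) ∂((γ i).condKernel x)
        = (γ i).condKernel x (↑(suppF i) : Set (Euc d))ᶜ := by
      intro x
      rw [← lintegral_indicator_one hm]
      rfl
    simp only [h2] at h1
    exact (lintegral_eq_zero_iff (ProbabilityTheory.Kernel.measurable_coe _ hm)).1 h1.symm
  set g : Fin N → Euc d → Euc d → ℝ≥0∞ := fun i x k => (γ i).condKernel x {k} with hgdef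
  have hgm : ∀ i k, Measurable fun x => g i x k := fun i k =>
    ProbabilityTheory.Kernel.measurable_coe _ (measurableSet_singleton k)
  have hsum : ∀ᵐ x ∂Q, ∀ i, ∑ k ∈ suppF i, g i x k = 1 := by
    rw [ae_all_iff]
    intro i
    filter_upwards [hcar i] with x hx
    have := lintegral_of_carrier hx (fun _ => 1)
    simp only [lintegral_const, measure_univ, mul_one] at this
    exact this.symm
  have hint' : ∀ i (f : Euc d × Euc d → ℝ≥0∞), Measurable f →
      ∫⁻ p, f p ∂(γ i) = ∫⁻ x, ∑ k ∈ suppF i, g i x k * f (x, k) ∂Q := by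
    intro i f hf
    rw [hint i f hf]
    refine lintegral_congr_ae ?_
    filter_upwards [hcar i] with x hx
    exact lintegral_of_carrier hx _
  -- the mass of the tuple `κ` under the couplings glued along `Q`
  set w : (Fin N → Euc d) → ℝ≥0∞ := fun κ => ∫⁻ x, ∏ l, g l x (κ l) ∂Q with hw
  have hpm : ∀ κ : Fin N → Euc d, Measurable fun x => ∏ l, g l x (κ l) := fun κ =>
    Finset.measurable_prod _ fun l _ => hgm l _
  have hmf : ∀ (κ : Fin N → Euc d) (f : Euc d × Euc d → ℝ≥0∞), Measurable f →
      ∀ i, Measurable fun x => (∏ l, g l x (κ l)) * f (x, κ i) := fun κ f hf i =>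
    (hpm κ).mul (hf.comp measurable_prodMk_right)
  have hwfin : ∀ κ, w κ ≠ ⊤ := by
    intro κ
    have : w κ ≤ ∫⁻ _, 1 ∂Q :=
      lintegral_mono fun x => Finset.prod_le_one' fun l _ => prob_le_one
    exact ne_top_of_le_ne_top (by simp) this
  have hint2 : ∀ i (f : Euc d × Euc d → ℝ≥0∞), Measurable f →
      ∫⁻ p, f p ∂(γ i) = ∑ κ ∈ Fintype.piFinset suppF,
        ∫⁻ x, (∏ l, g l x (κ l)) * f (x, κ i) ∂Q := by
    intro i f hf
    rw [hint' i f hf, ← lintegral_finsetSum _ (fun κ _ => hmf κ f hf i)]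
    refine lintegral_congr_ae ?_
    filter_upwards [hsum] with x hx
    exact (marginal suppF (fun l => g l x) hx i (fun k => f (x, k))).symm
  obtain ⟨y, z, hf, hc⟩ := feasible_of_weights P SF suppF hSF (fun κ => (w κ).toReal)
    (fun _ => ENNReal.toReal_nonneg) (by
      intro i k hk
      have hk' : MeasurableSet ({k} : Set (Euc d)) := measurableSet_singleton k
      have h1 := hint2 i ((Prod.snd ⁻¹' {k}).indicator 1)
        (measurable_one.indicator (measurable_snd hk'))
      rw [lintegral_indicator_one (measurable_snd hk'), ← Measure.map_apply measurable_snd hk',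
        (hγ i).2] at h1
      rw [h1, ENNReal.toReal_sum]
      · refine Finset.sum_congr rfl fun κ _ => ?_
        by_cases hκ : κ i = k
        · simp [hκ, hw]
        · simp [hκ]
      · intro κ _
        refine ne_top_of_le_ne_top (hwfin κ) (lintegral_mono fun x => ?_)
        refine mul_le_of_le_one_right' ?_
        exact Set.indicator_le_self' (fun _ _ => zero_le) _)
  refine ⟨y, z, hf, ?_⟩
  have hfm : Measurable fun p : Euc d × Euc d => (‖p.1 - p.2‖₊ : ℝ≥0∞) ^ 2 := by fun_prop
  rw [hc, Finset.sum_congr rfl fun i _ => hint2 i _ hfm, Finset.sum_comm,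
    ENNReal.ofReal_sum_of_nonneg (fun κ _ => by positivity)]
  refine Finset.sum_le_sum fun κ _ => ?_
  rw [← lintegral_finsetSum _ (fun i _ => hmf κ _ hfm i),
    ENNReal.ofReal_mul ENNReal.toReal_nonneg, ENNReal.ofReal_toReal (hwfin κ), hw,
    ← lintegral_mul_const _ (hpm κ)]
  refine lintegral_mono fun x => ?_
  rw [← Finset.mul_sum]
  gcongr
  have := ENNReal.ofReal_le_ofReal (centroid_min hN κ x)
  refine this.trans (le_of_eq ?_)
  rw [ENNReal.ofReal_sum_of_nonneg (fun _ _ => by positivity)]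
  refine Finset.sum_congr rfl fun i _ => ?_
  rw [ENNReal.ofReal_pow (by positivity), ofReal_norm]
  rfl

/-! ### Attainment in the LP and the Wasserstein infimum -/

/-- The LP attains its minimum: after setting the irrelevant variables to zero, the feasible
`y` lie in the cube `[0,1]^(Fin N × ℝ^d × ℝ^d)`, which is compact in the product topology. -/
lemma exists_optimal {d N : ℕ} (hN : 0 < N) (P : Fin N → Measure (Euc d))
    (hP : ∀ i, IsProbabilityMeasure (P i))
    (SF : Finset (Euc d)) (suppF : Fin N → Finset (Euc d))
    (hne : ∃ y z, LPFeasible P SF suppF y z) : ∃ y z, LPOptimal P SF suppF y z := by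
  classical
  let i0 : Fin N := ⟨0, hN⟩
  let K : Set (Fin N → Euc d → Euc d → ℝ) :=
    (Set.univ.pi fun _ => Set.univ.pi fun _ => Set.univ.pi fun _ => Set.Icc (0 : ℝ) 1) ∩
    {y | (∀ i, ∀ j ∈ SF, ∑ k ∈ suppF i, y i j k = ∑ k ∈ suppF i0, y i0 j k) ∧
      ∀ i, ∀ k ∈ suppF i, ∑ j ∈ SF, y i j k = (P i {k}).toReal}
  have hK : IsCompact K := by
    refine IsCompact.inter_right (isCompact_univ_pi fun _ => isCompact_univ_pi fun _ =>
      isCompact_univ_pi fun _ => isCompact_Icc) ?_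
    simp only [Set.ofPred_and, Set.ofPred_forall]
    refine IsClosed.inter ?_ ?_
    · refine isClosed_iInter fun i => isClosed_iInter fun j => isClosed_iInter fun _ => ?_
      exact isClosed_eq (by fun_prop) (by fun_prop)
    · refine isClosed_iInter fun i => isClosed_iInter fun j => isClosed_iInter fun _ => ?_
      exact isClosed_eq (by fun_prop) (by fun_prop)
  -- every feasible point has the same cost as a point of `K`
  have htr : ∀ y z, LPFeasible P SF suppF y z →
      ∃ y' ∈ K, LPcost SF suppF y' = LPcost SF suppF y := by
    rintro y z ⟨hy, hz, hrow, hcol⟩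
    refine ⟨fun i j k => if j ∈ SF ∧ k ∈ suppF i then y i j k else 0, ⟨?_, ?_, ?_⟩, ?_⟩
    · simp only [Set.mem_pi, Set.mem_univ, forall_true_left]
      intro i j k
      split_ifs with h
      · refine ⟨hy i j k, ?_⟩
        calc y i j k ≤ ∑ j ∈ SF, y i j k :=
              Finset.single_le_sum (f := fun j => y i j k) (fun j _ => hy i j k) h.1
          _ = (P i {k}).toReal := hcol i k h.2
          _ ≤ 1 := measureReal_le_one
      · simp
    · intro i j hj
      have h1 : ∀ i, ∑ k ∈ suppF i, (if j ∈ SF ∧ k ∈ suppF i then y i j k else 0) = z j := by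
        intro i
        rw [← hrow i j hj]
        exact Finset.sum_congr rfl fun k hk => if_pos ⟨hj, hk⟩
      rw [h1, h1]
    · intro i k hk
      rw [← hcol i k hk]
      exact Finset.sum_congr rfl fun j hj => if_pos ⟨hj, hk⟩
    · refine Finset.sum_congr rfl fun i _ => Finset.sum_congr rfl fun j hj =>
        Finset.sum_congr rfl fun k hk => ?_
      simp [hj, hk]
  have hKne : K.Nonempty := by
    obtain ⟨y, z, h⟩ := hne
    obtain ⟨y', h', -⟩ := htr y z h
    exact ⟨y', h'⟩
  obtain ⟨y, hyK, hmin⟩ := hK.exists_isMinOn (f := LPcost SF suppF) hKne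
    (by unfold LPcost; fun_prop)
  obtain ⟨hbox, hrow, hcol⟩ := hyK
  simp only [Set.mem_pi, Set.mem_univ, forall_true_left] at hbox
  refine ⟨y, fun j => ∑ k ∈ suppF i0, y i0 j k,
    ⟨fun i j k => (hbox i j k).1, fun j => Finset.sum_nonneg fun k _ => (hbox i0 j k).1,
      hrow, hcol⟩, ?_⟩
  intro y' z' h'
  obtain ⟨y'', h1, h2⟩ := htr y' z' h'
  rw [← h2]
  exact hmin h1

lemma isCoupling_prod {d : ℕ} (Q R : Measure (Euc d)) [IsProbabilityMeasure Q]
    [IsProbabilityMeasure R] : IsCoupling (Q.prod R) Q R := by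
  constructor
  · simp [Measure.map_fst_prod]
  · simp [Measure.map_snd_prod]

/-- A lower bound on the total cost of all families of couplings with `Q` bounds `∑ W₂²`. -/
lemma le_sum_W2 {d N : ℕ} (P : Fin N → Measure (Euc d)) (Q : Measure (Euc d)) (c : ℝ≥0∞)
    (h : ∀ γ : Fin N → Measure (Euc d × Euc d), (∀ i, IsCoupling (γ i) Q (P i)) →
      c ≤ ∑ i, ∫⁻ p, (‖p.1 - p.2‖₊ : ℝ≥0∞) ^ 2 ∂(γ i)) :
    c ≤ ∑ i, W2sq Q (P i) := by
  by_cases htop : ∃ i, W2sq Q (P i) = ⊤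
  · obtain ⟨i, hi⟩ := htop
    rw [ENNReal.sum_eq_top.2 ⟨i, Finset.mem_univ i, hi⟩]
    exact le_top
  push Not at htop
  have key : ∀ ε : ℝ≥0∞, ε ≠ 0 → c ≤ ∑ i, (W2sq Q (P i) + ε) := by
    intro ε hε
    have hex : ∀ i, ∃ γ, IsCoupling γ Q (P i) ∧
        ∫⁻ p, (‖p.1 - p.2‖₊ : ℝ≥0∞) ^ 2 ∂γ < W2sq Q (P i) + ε := by
      intro i
      have hlt : W2sq Q (P i) < W2sq Q (P i) + ε := ENNReal.lt_add_right (htop i) hε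
      conv_lhs at hlt => rw [W2sq]
      simpa only [iInf_lt_iff, Set.mem_ofPred_eq, exists_prop] using hlt
    choose γ hγ hlt using hex
    exact (h γ hγ).trans (Finset.sum_le_sum fun i _ => (hlt i).le)
  have hcont : Filter.Tendsto (fun ε : ℝ≥0∞ => ∑ i, (W2sq Q (P i) + ε)) (nhdsWithin 0 (Set.Ioi 0))
      (nhds (∑ i, (W2sq Q (P i) + 0))) := by
    have : Continuous fun ε : ℝ≥0∞ => ∑ i, (W2sq Q (P i) + ε) := by fun_prop
    exact (this.tendsto 0).mono_left nhdsWithin_le_nhds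
  simp only [add_zero] at hcont
  refine ge_of_tendsto hcont ?_
  filter_upwards [self_mem_nhdsWithin] with ε hε
  exact key ε (ne_of_gt hε)

lemma isProb_of_feasible {d N : ℕ} (hN : 0 < N) (P : Fin N → Measure (Euc d))
    (hP : ∀ i, IsProbabilityMeasure (P i))
    (SF : Finset (Euc d)) (suppF : Fin N → Finset (Euc d))
    (hnull : ∀ i, P i (↑(suppF i) : Set (Euc d))ᶜ = 0)
    (y : Fin N → Euc d → Euc d → ℝ) (z : Euc d → ℝ) (h : LPFeasible P SF suppF y z) :
    IsProbabilityMeasure (∑ j ∈ SF, ENNReal.ofReal (z j) • Measure.dirac j) := by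
  obtain ⟨hy, hz, hrow, hcol⟩ := h
  let i0 : Fin N := ⟨0, hN⟩
  constructor
  simp only [Measure.finsetSum_apply, Measure.smul_apply, smul_eq_mul, measure_univ, mul_one]
  rw [← ENNReal.ofReal_sum_of_nonneg (fun j _ => hz j),
    Finset.sum_congr rfl fun j hj => (hrow i0 j hj).symm, Finset.sum_comm,
    Finset.sum_congr rfl fun k hk => hcol i0 k hk,
    ← ENNReal.toReal_sum (fun k _ => measure_ne_top _ _)]
  have := lintegral_of_carrier (hnull i0) (fun _ => 1)
  simp only [lintegral_const, measure_univ, mul_one] at this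
  rw [← this]
  simp

lemma finSecondMoment_sum_dirac {d : ℕ} (SF : Finset (Euc d)) (z : Euc d → ℝ) :
    FinSecondMoment (∑ j ∈ SF, ENNReal.ofReal (z j) • Measure.dirac j) := by
  unfold FinSecondMoment
  rw [lintegral_finsetSum_measure]
  refine ENNReal.sum_lt_top.2 fun j _ => ?_
  rw [lintegral_smul_measure, lintegral_dirac, smul_eq_mul]
  exact ENNReal.mul_lt_top ENNReal.ofReal_lt_top (ENNReal.pow_lt_top ENNReal.coe_lt_top)

/-- the barycenter LP has an optimal solution; its optimal value equals
`inf_{P ∈ 𝒫²(ℝ^d)} Σᵢ W₂(P, Pᵢ)²`, and for any optimal solution `(y*, z*)` the measure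
`P̄ = Σ_j z*_j δ_{x_j}` is a barycenter of `P₁, …, P_N` with `Σᵢ W₂(P̄, Pᵢ)² = c(y*)`. -/
theorem stmt15 {d N : ℕ} (hN : 0 < N) (P : Fin N → MeasureTheory.Measure (Euc d))
    (hP : ∀ i, IsDiscreteProb (P i))
    (SF : Finset (Euc d)) (hSF : ↑SF = centroidSet P)
    (suppF : Fin N → Finset (Euc d)) (hsuppF : ∀ i, ↑(suppF i) = msupp (P i)) :
    (∃ y z, LPOptimal P SF suppF y z) ∧
    ∀ y z, LPOptimal P SF suppF y z →
      ENNReal.ofReal (LPcost SF suppF y) =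
        (⨅ Q ∈ {Q : MeasureTheory.Measure (Euc d) |
            MeasureTheory.IsProbabilityMeasure Q ∧ FinSecondMoment Q},
          ∑ i, W2sq Q (P i)) ∧
      IsBarycenter P (∑ j ∈ SF, ENNReal.ofReal (z j) • MeasureTheory.Measure.dirac j) ∧
      (∑ i, W2sq (∑ j ∈ SF, ENNReal.ofReal (z j) • MeasureTheory.Measure.dirac j) (P i))
        = ENNReal.ofReal (LPcost SF suppF y) := by
  have hprob : ∀ i, IsProbabilityMeasure (P i) := fun i => (hP i).1
  have hnull : ∀ i, P i (↑(suppF i) : Set (Euc d))ᶜ = 0 := by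
    intro i
    rw [hsuppF i]
    exact msupp_compl_null _
  have hSF' : ∀ κ ∈ Fintype.piFinset suppF, avgMap d N κ ∈ SF := by
    intro κ hκ
    rw [← Finset.mem_coe, hSF]
    refine ⟨κ, fun i => ?_, rfl⟩
    rw [← hsuppF i]
    exact Fintype.mem_piFinset.1 hκ i
  refine ⟨?_, ?_⟩
  · refine exists_optimal hN P hprob SF suppF ?_
    obtain ⟨y, z, h, -⟩ := feasible_of_couplings hN P SF suppF hSF' hnull (P ⟨0, hN⟩)
      (fun i => (P ⟨0, hN⟩).prod (P i)) (fun i => isCoupling_prod _ _)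
    exact ⟨y, z, h⟩
  intro y z hopt
  have hlow : ∀ Q : Measure (Euc d), IsProbabilityMeasure Q →
      ENNReal.ofReal (LPcost SF suppF y) ≤ ∑ i, W2sq Q (P i) := by
    intro Q hQ
    refine le_sum_W2 P Q _ fun γ hγ => ?_
    obtain ⟨y', z', hf, hle⟩ := feasible_of_couplings hN P SF suppF hSF' hnull Q γ hγ
    exact (ENNReal.ofReal_le_ofReal (hopt.2 y' z' hf)).trans hle
  have hup := W2_le_of_feasible P hprob SF suppF hnull y z hopt.1
  have hPbar := isProb_of_feasible hN P hprob SF suppF hnull y z hopt.1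
  have hmom := finSecondMoment_sum_dirac SF z
  refine ⟨le_antisymm (le_iInf₂ fun Q hQ => hlow Q hQ.1) ?_, ⟨hPbar, hmom, ?_⟩,
    le_antisymm hup (hlow _ hPbar)⟩
  · exact (iInf₂_le _ ⟨hPbar, hmom⟩).trans hup
  · exact fun Q hQ _ => hup.trans (hlow Q hQ)
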